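/- arXiv:2101.09032 — 2 statements merged into one kernel-verified Lean document; each statement's English description precedes it below -/
import Mathlib

section
/- If a trace τ over (T,X,V) is SI, then its split trace τ_split is SI. (Lemma 1 of the paper, case X = SI.) -/
open scoped Classical

/-- A trace over `(T, X, V)`: transactions `T`, shared variables `X`, values `V`.
Each transaction has a read set `RS` with read values `rdval`, a write set `WS`
with last-written values `wrval`; there is an initial transaction `t0`, a
program order `po`, per-variable read-from relations `rf x` and per-variable
store orders `sto x`. -/
structure TxnTrace (T X V : Type*) where
  RS : T → Set X
  WS : T → Set X
  rdval : T → X → V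
  wrval : T → X → V
  t0 : T
  po : T → T → Prop
  rf : X → T → T → Prop
  sto : X → T → T → Prop

/-- a strict partial order: irreflexive and transitive binary relation -/
def StrictPartialRel {α : Type*} (r : α → α → Prop) : Prop :=
  (∀ a, ¬ r a a) ∧ ∀ a b c, r a b → r b c → r a c

/-- a strict total order -/
def StrictTotalRel {α : Type*} (r : α → α → Prop) : Prop :=
  StrictPartialRel r ∧ ∀ a b, a ≠ b → r a b ∨ r b a

/-- axiom Prefix: `arb ; vis ⊆ vis` -/
def PrefixAx {α : Type*} (vis arb : α → α → Prop) : Prop :=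
  ∀ a b c, arb a b → vis b c → vis a c

/-- `vis` is a strict partial order, `arb` a strict total order, `vis ⊆ arb` -/
def GoodPair {α : Type*} (vis arb : α → α → Prop) : Prop :=
  StrictPartialRel vis ∧ StrictTotalRel arb ∧ ∀ a b, vis a b → arb a b

namespace TxnTrace

variable {T X V : Type*} (τ : TxnTrace T X V)

/-- the well-formedness conditions of a trace -/
structure WellFormed : Prop where
  rs_init : τ.RS τ.t0 = ∅
  ws_init : τ.WS τ.t0 = Set.univ
  po_irrefl : ∀ t, ¬ τ.po t t
  po_trans : ∀ a b c, τ.po a b → τ.po b c → τ.po a c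
  po_init : ∀ t, t ≠ τ.t0 → τ.po τ.t0 t
  rf_wf : ∀ x t' t, τ.rf x t' t →
    t' ≠ t ∧ x ∈ τ.RS t ∧ x ∈ τ.WS t' ∧ τ.wrval t' x = τ.rdval t x
  rf_total : ∀ t x, x ∈ τ.RS t → ∃! t', τ.rf x t' t
  sto_dom : ∀ x a b, τ.sto x a b → x ∈ τ.WS a ∧ x ∈ τ.WS b
  sto_irrefl : ∀ x a, ¬ τ.sto x a a
  sto_trans : ∀ x a b c, τ.sto x a b → τ.sto x b c → τ.sto x a c
  sto_total : ∀ x a b, x ∈ τ.WS a → x ∈ τ.WS b → a ≠ b → τ.sto x a b ∨ τ.sto x b a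

/-- `rf = ⋃ x, rf x` -/
def rfR (a b : T) : Prop := ∃ x, τ.rf x a b

/-- `sto = ⋃ x, sto x` -/
def stoR (a b : T) : Prop := ∃ x, τ.sto x a b

/-- the conflict relation: `(t1,t3) ∈ cf` iff `t1 ≠ t3` and there are `x`, `t2`
with `(t2,t1) ∈ rf_x` and `(t2,t3) ∈ sto_x` -/
def cf (a b : T) : Prop := a ≠ b ∧ ∃ x w, τ.rf x w a ∧ τ.sto x w b

/-- `vis0 = po ∪ rf` -/
def vis0 (a b : T) : Prop := τ.po a b ∨ τ.rfR a b

/-- `arb0 = po ∪ rf ∪ sto` -/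
def arb0 (a b : T) : Prop := τ.po a b ∨ τ.rfR a b ∨ τ.stoR a b

/-- happens-before: `(po ∪ rf ∪ sto ∪ cf)⁺` -/
def hb : T → T → Prop := Relation.TransGen (fun a b => τ.arb0 a b ∨ τ.cf a b)

/-- axiom PoCo: `vis0⁺ ⊆ vis` -/
def PoCo (vis : T → T → Prop) : Prop := ∀ a b, Relation.TransGen τ.vis0 a b → vis a b

/-- axiom CoArb: `arb0⁺ ⊆ arb` -/
def CoArb (arb : T → T → Prop) : Prop := ∀ a b, Relation.TransGen τ.arb0 a b → arb a b

/-- axiom RetVal: every read of `x` in `t` reads from the `arb`-greatest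
`vis`-predecessor of `t` writing `x` -/
def RetVal (vis arb : T → T → Prop) : Prop :=
  ∀ t x, x ∈ τ.RS t → ∃ t00,
    (vis t00 t ∧ x ∈ τ.WS t00) ∧
    (∀ t', vis t' t → x ∈ τ.WS t' → t' ≠ t00 → arb t' t00) ∧
    τ.rf x t00 t


/-- axiom Conflict: `sto ⊆ vis` -/
def ConflictAx (vis : T → T → Prop) : Prop := ∀ a b, τ.stoR a b → vis a b


/-- causal consistency -/
def IsCC : Prop :=
  ∃ vis arb, GoodPair vis arb ∧ τ.PoCo vis ∧ τ.CoArb arb ∧ τ.RetVal vis arb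

/-- prefix consistency -/
def IsPC : Prop :=
  ∃ vis arb, GoodPair vis arb ∧ τ.PoCo vis ∧ τ.CoArb arb ∧ τ.RetVal vis arb ∧
    PrefixAx vis arb

/-- snapshot isolation -/
def IsSI : Prop :=
  ∃ vis arb, GoodPair vis arb ∧ τ.PoCo vis ∧ τ.CoArb arb ∧ τ.RetVal vis arb ∧
    PrefixAx vis arb ∧ τ.ConflictAx vis

/-- serializability: some strict total order `arb` with `arb0⁺ ⊆ arb` satisfies
RetVal with `vis = arb` -/
def IsSER : Prop :=
  ∃ arb, StrictTotalRel arb ∧ τ.CoArb arb ∧ τ.RetVal arb arb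

/-- the read part `t_rd` of a transaction in the split trace -/
def rdPart (t : T) : T × Bool := (t, false)

/-- the write part `t_wr` of a transaction in the split trace;
the initial transaction `t0` is kept unchanged and plays both roles -/
noncomputable def wrPart (t : T) : T × Bool := if t = τ.t0 then (t, false) else (t, true)

/-- the split trace `τ_split`: every transaction `t ≠ t0` is split into a read
part `t_rd` and a write part `t_wr`; `po'` is the smallest transitive relation
containing `(t_rd, t_wr)` for every split `t` and `(u_wr, v_rd)` for `(u,v) ∈ po`;
`rf'_x = {(u_wr, v_rd) : (u,v) ∈ rf_x}`; `sto'_x = {(u_wr, v_wr) : (u,v) ∈ sto_x}`.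
(The pair `(t0, true)` is an unused dummy element with empty read and write sets and
no incident relations.) -/
noncomputable def split : TxnTrace (T × Bool) X V where
  RS p := if p = rdPart p.1 then τ.RS p.1 else ∅
  WS p := if p = τ.wrPart p.1 then τ.WS p.1 else ∅
  rdval p x := τ.rdval p.1 x
  wrval p x := τ.wrval p.1 x
  t0 := (τ.t0, false)
  po := Relation.TransGen (fun a b =>
    (∃ t, t ≠ τ.t0 ∧ a = rdPart t ∧ b = τ.wrPart t) ∨
    (∃ u v, τ.po u v ∧ a = τ.wrPart u ∧ b = rdPart v))
  rf := fun x a b => ∃ u v, τ.rf x u v ∧ a = τ.wrPart u ∧ b = rdPart v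
  sto := fun x a b => ∃ u v, τ.sto x u v ∧ a = τ.wrPart u ∧ b = τ.wrPart v

end TxnTrace

/-!
Identify `arb` with a linear order on `T`. By Prefix, the set of transactions visible to `t` is a
lower set, and lower sets of a linear order form a chain. Place the read part of `t` at the cut
`{u | vis u t}` and the write part of `u` at the cut `{v | v ≤ u}`: the write part of `u` then
precedes the read part of `t` exactly when `vis u t`. This order serializes the split trace, so
every read part sees precisely the write parts that its transaction saw.
-/

section StrictTotalRel

variable {α : Type*}

theorem StrictTotalRel.isStrictTotalOrder {r : α → α → Prop} (h : StrictTotalRel r) :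
    IsStrictTotalOrder α r where
  irrefl := h.1.1
  trans := h.1.2
  trichotomous a b hab hba := by_contra fun hne => (h.2 a b hne).elim hab hba

theorem strictTotalRel_lt_of_injective {β : Type*} [LinearOrder β] {f : α → β}
    (hf : f.Injective) : StrictTotalRel fun a b => f a < f b :=
  ⟨⟨fun _ => lt_irrefl _, fun _ _ _ => lt_trans⟩, fun _ _ hab => lt_or_gt_of_ne (hf.ne hab)⟩

end StrictTotalRel

section SplitKey

variable {T : Type*} [LinearOrder T] {vis : T → T → Prop}

/-- The cut of the order of transactions at which each part of a split transaction takes place: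
the read part `(t, false)` just after the transactions visible to `t`, the write part `(t, true)`
just after `t` itself. -/
def splitCut (hprefix : PrefixAx vis (· < ·)) : T × Bool → LowerSet T
  | (t, false) => ⟨{u | vis u t}, fun _ _ hle hvis =>
      hle.eq_or_lt.elim (fun heq => heq ▸ hvis) fun hlt => hprefix _ _ _ hlt hvis⟩
  | (t, true) => LowerSet.Iic t

/-- The position of a part of a split transaction in the serialization of the split trace. Parts
sharing a cut are at most one write part, which has to come first, and read parts of transactions
to which its transaction is visible, so the order of transactions breaks the tie correctly. -/
def splitKey (hprefix : PrefixAx vis (· < ·)) (p : T × Bool) : LowerSet T ×ₗ T :=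
  toLex (splitCut hprefix p, p.1)

variable {hprefix : PrefixAx vis (· < ·)}

theorem mem_splitCut_read {u t : T} : u ∈ splitCut hprefix (t, false) ↔ vis u t :=
  Iff.rfl

theorem mem_splitCut_write {u t : T} : u ∈ splitCut hprefix (t, true) ↔ u ≤ t :=
  Iff.rfl

theorem splitKey_lt_of_splitCut_lt {p q : T × Bool}
    (h : splitCut hprefix p < splitCut hprefix q) : splitKey hprefix p < splitKey hprefix q :=
  Prod.Lex.toLex_lt_toLex.mpr (.inl h)

theorem splitKey_write_strictMono : StrictMono fun t => splitKey hprefix (t, true) :=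
  fun _ _ hlt => splitKey_lt_of_splitCut_lt (LowerSet.Iic_strictMono _ hlt)

theorem splitKey_read_lt_write_of_not_vis {u t : T} (hnot : ¬ vis u t) :
    splitKey hprefix (t, false) < splitKey hprefix (u, true) :=
  splitKey_lt_of_splitCut_lt <| lt_of_not_ge fun hle =>
    hnot (mem_splitCut_read.mp (hle (mem_splitCut_write.mpr le_rfl)))

theorem splitKey_injective (hvis : ∀ a b, vis a b → a < b) :
    (splitKey hprefix).Injective := by
  have read_ne_write (t : T) : splitKey hprefix (t, false) ≠ splitKey hprefix (t, true) :=
    (splitKey_read_lt_write_of_not_vis fun hself => (hvis t t hself).false).ne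
  rintro ⟨t, b⟩ ⟨u, c⟩ heq
  obtain rfl : t = u := congrArg (fun key => (ofLex key).2) heq
  cases b <;> cases c
  · rfl
  · exact (read_ne_write t heq).elim
  · exact (read_ne_write t heq.symm).elim
  · rfl

theorem splitKey_write_lt_read_iff (hvis : ∀ a b, vis a b → a < b) {u t : T} :
    splitKey hprefix (u, true) < splitKey hprefix (t, false) ↔ vis u t := by
  refine ⟨fun hlt => by_contra fun hnot => ?_, fun hut => ?_⟩
  · exact hlt.asymm (splitKey_read_lt_write_of_not_vis hnot)
  · have cut_le : splitCut hprefix (u, true) ≤ splitCut hprefix (t, false) :=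
      LowerSet.Iic_le.mpr hut
    exact Prod.Lex.toLex_lt_toLex'.mpr ⟨cut_le, fun _ => hvis u t hut⟩

theorem splitKey_read_lt_of_forall_vis (hvis : ∀ a b, vis a b → a < b) {b : T}
    (hb : ∀ t, t ≠ b → vis b t) {p : T × Bool} (hp : p ≠ (b, false)) :
    splitKey hprefix (b, false) < splitKey hprefix p := by
  obtain ⟨t, _ | _⟩ := p
  · have htb : t ≠ b := by simpa using hp
    refine splitKey_lt_of_splitCut_lt <| lt_of_not_ge fun hle => ?_
    exact (hvis b b (hle (mem_splitCut_read.mpr (hb t htb)))).false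
  · refine splitKey_read_lt_write_of_not_vis fun htb => ?_
    exact (hvis t b htb).asymm (hvis b t (hb t (hvis t b htb).ne))

end SplitKey

namespace TxnTrace

variable {T X V : Type*} {τ : TxnTrace T X V}

theorem IsSER.isSI (h : τ.IsSER) : τ.IsSI := by
  obtain ⟨arb, htotal, hcoarb, hret⟩ := h
  have vis0_le_arb0 (a b : T) (hab : τ.vis0 a b) : τ.arb0 a b := hab.imp_right .inl
  exact ⟨arb, arb, ⟨htotal.1, htotal, fun _ _ => id⟩,
    fun a b hab => hcoarb a b (Relation.TransGen.mono vis0_le_arb0 a b hab),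
    hcoarb, hret, htotal.1.2,
    fun a b hab => hcoarb a b (.single (.inr (.inr hab)))⟩

theorem IsSI.isPC (h : τ.IsSI) : τ.IsPC :=
  let ⟨vis, arb, hgood, hpoco, hcoarb, hret, hprefix, _⟩ := h
  ⟨vis, arb, hgood, hpoco, hcoarb, hret, hprefix⟩

theorem wrPart_init : τ.wrPart τ.t0 = (τ.t0, false) :=
  if_pos rfl

theorem wrPart_of_ne {t : T} (ht : t ≠ τ.t0) : τ.wrPart t = (t, true) :=
  if_neg ht

theorem fst_wrPart (t : T) : (τ.wrPart t).1 = t := by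
  by_cases ht : t = τ.t0
  · rw [ht, wrPart_init]
  · rw [wrPart_of_ne ht]

theorem wrPart_ne_init {t : T} (ht : t ≠ τ.t0) : τ.wrPart t ≠ (τ.t0, false) := by
  simp [wrPart_of_ne ht]

theorem mem_split_RS {p : T × Bool} {x : X} :
    x ∈ τ.split.RS p ↔ ∃ t, p = rdPart t ∧ x ∈ τ.RS t := by
  constructor
  · intro hx
    obtain ⟨hp, hx⟩ := (Set.mem_ite_empty_right _ _ _).mp hx
    exact ⟨p.1, hp, hx⟩
  · rintro ⟨t, rfl, hx⟩
    exact (Set.mem_ite_empty_right _ _ _).mpr ⟨rfl, hx⟩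

theorem mem_split_WS {p : T × Bool} {x : X} :
    x ∈ τ.split.WS p ↔ ∃ t, p = τ.wrPart t ∧ x ∈ τ.WS t := by
  constructor
  · intro hx
    obtain ⟨hp, hx⟩ := (Set.mem_ite_empty_right _ _ _).mp hx
    exact ⟨p.1, hp, hx⟩
  · rintro ⟨t, rfl, hx⟩
    refine (Set.mem_ite_empty_right _ _ _).mpr ?_
    rw [fst_wrPart]
    exact ⟨rfl, hx⟩

section Serialization

variable [LinearOrder T] {vis : T → T → Prop} {hprefix : PrefixAx vis (· < ·)}

theorem splitKey_wrPart_lt_rdPart_iff (hvis : ∀ a b, vis a b → a < b)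
    (hinit : ∀ t, t ≠ τ.t0 → vis τ.t0 t) {u t : T} :
    splitKey hprefix (τ.wrPart u) < splitKey hprefix (rdPart t) ↔ vis u t := by
  by_cases hu : u = τ.t0
  · subst hu
    rw [wrPart_init]
    by_cases ht : t = τ.t0
    · subst ht
      exact iff_of_false (lt_irrefl _) fun hself => (hvis _ _ hself).false
    · refine iff_of_true (splitKey_read_lt_of_forall_vis hvis hinit ?_) (hinit t ht)
      simpa [rdPart] using ht
  · rw [wrPart_of_ne hu]
    exact splitKey_write_lt_read_iff hvis

theorem splitKey_wrPart_strictMono (hvis : ∀ a b, vis a b → a < b)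
    (hinit : ∀ t, t ≠ τ.t0 → vis τ.t0 t) :
    StrictMono fun t => splitKey hprefix (τ.wrPart t) := by
  intro u v huv
  have hv : v ≠ τ.t0 := by
    rintro rfl
    exact huv.asymm (hvis _ _ (hinit u huv.ne))
  by_cases hu : u = τ.t0
  · subst hu
    simpa only [wrPart_init] using
      splitKey_read_lt_of_forall_vis hvis hinit (wrPart_ne_init hv)
  · simpa only [wrPart_of_ne hu, wrPart_of_ne hv] using splitKey_write_strictMono huv

theorem splitKey_rdPart_lt_wrPart (hvis : ∀ a b, vis a b → a < b) {t : T} (ht : t ≠ τ.t0) :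
    splitKey hprefix (rdPart t) < splitKey hprefix (τ.wrPart t) := by
  rw [wrPart_of_ne ht]
  exact splitKey_read_lt_write_of_not_vis fun hself => (hvis t t hself).false

theorem splitKey_lt_of_split_po (hvis : ∀ a b, vis a b → a < b)
    (hinit : ∀ t, t ≠ τ.t0 → vis τ.t0 t) (hpo : ∀ u v, τ.po u v → vis u v)
    {p q : T × Bool} (hpq : τ.split.po p q) : splitKey hprefix p < splitKey hprefix q := by
  refine Relation.TransGen.trans_induction_on
    (motive := fun {a b} _ => splitKey hprefix a < splitKey hprefix b) hpq ?_
    fun _ _ => lt_trans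
  rintro _ _ (⟨t, ht, rfl, rfl⟩ | ⟨u, v, huv, rfl, rfl⟩)
  · exact splitKey_rdPart_lt_wrPart hvis ht
  · exact (splitKey_wrPart_lt_rdPart_iff hvis hinit).mpr (hpo u v huv)

theorem splitKey_lt_of_split_arb0 (hvis : ∀ a b, vis a b → a < b)
    (hinit : ∀ t, t ≠ τ.t0 → vis τ.t0 t) (hvis0 : ∀ u v, τ.vis0 u v → vis u v)
    (hsto : ∀ u v, τ.stoR u v → u < v) {p q : T × Bool} (hpq : τ.split.arb0 p q) :
    splitKey hprefix p < splitKey hprefix q := by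
  obtain hpo | ⟨x, u, v, hrf, rfl, rfl⟩ | ⟨x, u, v, huv, rfl, rfl⟩ := hpq
  · exact splitKey_lt_of_split_po hvis hinit (fun u v huv => hvis0 u v (.inl huv)) hpo
  · exact (splitKey_wrPart_lt_rdPart_iff hvis hinit).mpr (hvis0 u v (.inr ⟨x, hrf⟩))
  · exact splitKey_wrPart_strictMono hvis hinit (hsto u v ⟨x, huv⟩)

theorem RetVal.split (hvis : ∀ a b, vis a b → a < b) (hinit : ∀ t, t ≠ τ.t0 → vis τ.t0 t)
    (hret : τ.RetVal vis (· < ·)) :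
    τ.split.RetVal (fun p q => splitKey hprefix p < splitKey hprefix q)
      (fun p q => splitKey hprefix p < splitKey hprefix q) := by
  intro p x hx
  obtain ⟨t, rfl, hxt⟩ := mem_split_RS.mp hx
  obtain ⟨w, ⟨hwt, hxw⟩, hmax, hrf⟩ := hret t x hxt
  refine ⟨τ.wrPart w, ⟨(splitKey_wrPart_lt_rdPart_iff hvis hinit).mpr hwt,
    mem_split_WS.mpr ⟨w, rfl, hxw⟩⟩, fun q hqt hxq hne => ?_, ⟨w, t, hrf, rfl, rfl⟩⟩
  obtain ⟨u, rfl, hxu⟩ := mem_split_WS.mp hxq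
  have hut : vis u t := (splitKey_wrPart_lt_rdPart_iff hvis hinit).mp hqt
  exact splitKey_wrPart_strictMono hvis hinit (hmax u hut hxu (ne_of_apply_ne τ.wrPart hne))

end Serialization

end TxnTrace

theorem split_preserves_si_general {T X V : Type*} (τ : TxnTrace T X V)
    (hinit : ∀ t, t ≠ τ.t0 → τ.po τ.t0 t) (h : τ.IsPC) : τ.split.IsSER := by
  obtain ⟨vis, arb, ⟨-, htotal, hvis⟩, hpoco, hcoarb, hret, hprefix⟩ := h
  have := htotal.isStrictTotalOrder
  let : LinearOrder T := linearOrderOfSTO arb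
  have vis0_le (u v : T) (huv : τ.vis0 u v) : vis u v := hpoco u v (.single huv)
  have sto_le (u v : T) (huv : τ.stoR u v) : arb u v := hcoarb u v (.single (.inr (.inr huv)))
  have vis_init (t : T) (ht : t ≠ τ.t0) : vis τ.t0 t := vis0_le _ _ (.inl (hinit t ht))
  have key_total := strictTotalRel_lt_of_injective (splitKey_injective (hprefix := hprefix) hvis)
  refine ⟨_, key_total, fun p q hpq => ?_, hret.split hvis vis_init⟩
  exact Relation.TransGen.trans_induction_on hpq
    (TxnTrace.splitKey_lt_of_split_arb0 hvis vis_init vis0_le sto_le) fun _ _ => lt_trans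

/-- Lemma 1, case SI: if a trace is SI then its split trace is SI. -/
theorem split_preserves_si {T X V : Type*} [Fintype T] (τ : TxnTrace T X V)
    (hwf : τ.WellFormed) (h : τ.IsSI) : τ.split.IsSI :=
  (split_preserves_si_general τ hwf.po_init h.isPC).isSI
end

section
/- If a trace τ over (T,X,V) is PC, then the transitive closure of (po ∪ rf ∪ sto) ∪ ((po ∪ rf) ; cf) is irreflexive (equivalently: every happens-before cycle of τ contains either two successive cf dependencies or a sto dependency immediately followed by a cf dependency). (Lemma 7 of the paper.) -/
open scoped Classical

/-! A conflict edge `c → b` forces `b` to be invisible to `c`: otherwise `c` would have to read from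
`b`, or from something even later, instead of from the overwritten transaction. Prefix makes the
`vis`-predecessors of `c` an initial segment of the total order `arb`, so every such predecessor is
`arb`-below `b`. Hence both `po ∪ rf ∪ sto` and `(po ∪ rf) ; cf` are contained in `arb`. -/

theorem StrictPartialRel.not_transGen_self {α : Type*} {r s : α → α → Prop}
    (hs : StrictPartialRel s) (hrs : ∀ a b, r a b → s a b) (a : α) :
    ¬ Relation.TransGen r a a := by
  have : IsTrans α s := ⟨hs.2⟩
  exact fun h => hs.1 a (Relation.transGen_minimal hrs a a h)

theorem PrefixAx.arb_of_vis_of_not_vis {α : Type*} {vis arb : α → α → Prop}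
    (hprefix : PrefixAx vis arb) (htotal : ∀ a b, a ≠ b → arb a b ∨ arb b a) {a b c : α}
    (hac : vis a c) (hbc : ¬ vis b c) : arb a b := by
  have hne : a ≠ b := by
    rintro rfl
    exact hbc hac
  exact (htotal a b hne).resolve_right fun hba => hbc (hprefix b a c hba hac)

namespace TxnTrace

variable {T X V : Type*} {τ : TxnTrace T X V} {vis arb : T → T → Prop}

theorem WellFormed.rf_left_unique (hwf : τ.WellFormed) {x : X} {u v t : T}
    (hu : τ.rf x u t) (hv : τ.rf x v t) : u = v :=
  (hwf.rf_total t x (hwf.rf_wf x u t hu).2.1).unique hu hv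

theorem RetVal.arb_of_rf_of_vis (hret : τ.RetVal vis arb) (hwf : τ.WellFormed) {x : X} {t u w : T}
    (hrf : τ.rf x w t) (hvis : vis u t) (hux : x ∈ τ.WS u) (hne : u ≠ w) : arb u w := by
  obtain ⟨v, -, hmax, hvt⟩ := hret t x (hwf.rf_wf x w t hrf).2.1
  obtain rfl : v = w := hwf.rf_left_unique hvt hrf
  exact hmax u hvis hux hne

theorem RetVal.not_vis_of_cf (hret : τ.RetVal vis arb) (hwf : τ.WellFormed)
    (harb : StrictPartialRel arb) (hco : τ.CoArb arb) {b c : T} (hcf : τ.cf c b) : ¬ vis b c := by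
  obtain ⟨-, x, w, hrf, hsto⟩ := hcf
  intro hbc
  have hwb : arb w b := hco w b (.single (.inr (.inr ⟨x, hsto⟩)))
  have hne : b ≠ w := by
    rintro rfl
    exact harb.1 b hwb
  have hbw : arb b w := hret.arb_of_rf_of_vis hwf hrf hbc (hwf.sto_dom x w b hsto).2 hne
  exact harb.1 b (harb.2 b w b hbw hwb)

end TxnTrace

theorem pc_cycle_shape_general {T X V : Type*} (τ : TxnTrace T X V)
    (hwf : τ.WellFormed) (hpc : τ.IsPC) :
    ∀ t, ¬ Relation.TransGen
      (fun a b => τ.arb0 a b ∨ ∃ c, τ.vis0 a c ∧ τ.cf c b) t t := by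
  obtain ⟨vis, arb, ⟨-, ⟨harb, htotal⟩, -⟩, hpo, hco, hret, hprefix⟩ := hpc
  refine harb.not_transGen_self ?_
  rintro a b (hab | ⟨c, hac, hcb⟩)
  · exact hco a b (.single hab)
  · have hvis : vis a c := hpo a c (.single hac)
    have hnvis : ¬ vis b c := hret.not_vis_of_cf hwf harb hco hcb
    exact hprefix.arb_of_vis_of_not_vis htotal hvis hnvis

/-- Lemma 7: in a PC trace, every happens-before cycle contains
either two successive `cf` dependencies or a `sto` dependency immediately
followed by a `cf` dependency, i.e. `((po ∪ rf ∪ sto) ∪ (po ∪ rf);cf)⁺` is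
irreflexive. -/
theorem pc_cycle_shape {T X V : Type*} [Fintype T] (τ : TxnTrace T X V)
    (hwf : τ.WellFormed) (hpc : τ.IsPC) :
    ∀ t, ¬ Relation.TransGen
      (fun a b => τ.arb0 a b ∨ ∃ c, τ.vis0 a c ∧ τ.cf c b) t t :=
  pc_cycle_shape_general τ hwf hpc
end
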